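/- arXiv:1507.04218 — 2 statements merged into one kernel-verified Lean document; each statement's English description precedes it below -/
import Mathlib

section
/- Let σ, d ≥ 1 be integers and let (α_j)_{j∈ℤ^d} ∈ ℓ¹(ℤ^d, ℂ). Then there exists T > 0 and a unique family (a_j)_{j∈ℤ^d} ∈ C^∞([0,T]; ℓ¹(ℤ^d, ℂ)) solving the resonant system i ȧ_j(t) = Σ_{(k₁,…,k_{2σ+1}) ∈ Res_j} a_{k₁}(t) \overline{a_{k₂}(t)} a_{k₃}(t) ⋯ a_{k_{2σ+1}}(t) with a_j(0) = α_j for every j ∈ ℤ^d, where the sum converges absolutely for each t. -/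
open MeasureTheory Filter Set
open scoped ENNReal NNReal

/-- The resonant set `Res_j` for the nonlinearity `|u|^{2σ}u` on `T^d`:
`(2σ+1)`-tuples `k` of integer vectors with alternating sum `j` and alternating sum
of squared norms `|j|²` (indices are `0`-based, so signs are `(-1)^ℓ`). -/
def resSet (σ d : ℕ) (j : Fin d → ℤ) : Set (Fin (2 * σ + 1) → (Fin d → ℤ)) :=
  {k | (∑ l : Fin (2 * σ + 1), ((-1 : ℤ) ^ (l : ℕ)) • k l) = j ∧
       (∑ l : Fin (2 * σ + 1), ((-1 : ℤ) ^ (l : ℕ)) * ∑ i, (k l i) ^ 2)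
         = ∑ i, (j i) ^ 2}

/-- The product `a_{k₁} \bar a_{k₂} a_{k₃} ⋯ a_{k_{2σ+1}}` (conjugation on the
factors with even `1`-based index, i.e. odd `0`-based index). -/
noncomputable def resProd (σ d : ℕ) (a : (Fin d → ℤ) → ℂ)
    (k : Fin (2 * σ + 1) → (Fin d → ℤ)) : ℂ :=
  ∏ l : Fin (2 * σ + 1),
    (if (l : ℕ) % 2 = 0 then a (k l) else (starRingEnd ℂ) (a (k l)))

/-!
A point of `ℓ¹(ℤ^d)` is an absolutely convergent combination of unit vectors, so a uniformly bounded
family of multilinear forms indexed by tuples of frequencies sums to a bounded multilinear map on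
`ℓ¹`. Every tuple `k` is resonant for at most one `j`, namely its alternating sum, hence the right
hand side of the system is the diagonal of one bounded real-multilinear map `ℓ¹ × ⋯ × ℓ¹ → ℓ¹`. The
system is therefore an ODE in a Banach space with a smooth vector field, to which Picard-Lindelöf
and Grönwall apply.
-/

section Multilinear

variable {ι : Type*} [Fintype ι] {β : ι → Type*} {E : ∀ i, β i → Type*}
  [∀ i b, NormedAddCommGroup (E i b)]

lemma lp_one_sum_norm_le_norm {γ : Type*} {F : γ → Type*} [∀ c, NormedAddCommGroup (F c)]
    (x : lp F 1) (s : Finset γ) : ∑ c ∈ s, ‖x c‖ ≤ ‖x‖ := by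
  simpa using lp.sum_rpow_le_norm_rpow (p := 1) (by simp) x s

lemma lp_one_sum_prod_norm_le (x : ∀ i, lp (E i) 1) (s : Finset (∀ i, β i)) :
    ∑ k ∈ s, ∏ i, ‖x i (k i)‖ ≤ ∏ i, ‖x i‖ := by
  classical
  calc ∑ k ∈ s, ∏ i, ‖x i (k i)‖
      ≤ ∑ k ∈ Fintype.piFinset fun i => s.image fun k => k i, ∏ i, ‖x i (k i)‖ := by
        refine Finset.sum_le_sum_of_subset_of_nonneg (fun k hk => ?_) fun _ _ _ => by positivity
        exact Fintype.mem_piFinset.2 fun i => Finset.mem_image_of_mem (fun k => k i) hk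
    _ = ∏ i, ∑ b ∈ s.image fun k => k i, ‖x i b‖ :=
        (Finset.prod_univ_sum _ fun i b => ‖x i b‖).symm
    _ ≤ ∏ i, ‖x i‖ :=
        Finset.prod_le_prod (fun _ _ => by positivity) fun i _ => lp_one_sum_norm_le_norm (x i) _

lemma lp_one_summable_prod_norm (x : ∀ i, lp (E i) 1) :
    Summable fun k : ∀ i, β i => ∏ i, ‖x i (k i)‖ :=
  summable_of_sum_le (fun _ => by positivity) (lp_one_sum_prod_norm_le x)

lemma lp_one_tsum_prod_norm_le (x : ∀ i, lp (E i) 1) :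
    ∑' k : ∀ i, β i, ∏ i, ‖x i (k i)‖ ≤ ∏ i, ‖x i‖ :=
  (lp_one_summable_prod_norm x).tsum_le_of_sum_le (lp_one_sum_prod_norm_le x)

variable {𝕜 : Type*} [NontriviallyNormedField 𝕜] [∀ i b, NormedSpace 𝕜 (E i b)]
  {G : Type*} [NormedAddCommGroup G] [NormedSpace 𝕜 G] {C : ℝ}
  {F : ∀ k : ∀ i, β i, ContinuousMultilinearMap 𝕜 (fun i => E i (k i)) G}

lemma norm_apply_lp_one_le (hF : ∀ k, ‖F k‖ ≤ C) (x : ∀ i, lp (E i) 1) (k : ∀ i, β i) :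
    ‖F k fun i => x i (k i)‖ ≤ C * ∏ i, ‖x i (k i)‖ :=
  (F k).le_of_opNorm_le (hF k) _

lemma norm_tsum_apply_lp_one_le (hF : ∀ k, ‖F k‖ ≤ C) (x : ∀ i, lp (E i) 1) :
    ‖∑' k, F k fun i => x i (k i)‖ ≤ |C| * ∏ i, ‖x i‖ :=
  calc ‖∑' k, F k fun i => x i (k i)‖
      ≤ C * ∑' k : ∀ i, β i, ∏ i, ‖x i (k i)‖ :=
        tsum_of_norm_bounded ((lp_one_summable_prod_norm x).hasSum.mul_left C)
          (norm_apply_lp_one_le hF x)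
    _ ≤ |C| * ∏ i, ‖x i‖ :=
        mul_le_mul (le_abs_self C) (lp_one_tsum_prod_norm_le x)
          (tsum_nonneg fun _ => by positivity) (abs_nonneg C)

variable [CompleteSpace G]

lemma summable_apply_lp_one (hF : ∀ k, ‖F k‖ ≤ C) (x : ∀ i, lp (E i) 1) :
    Summable fun k => F k fun i => x i (k i) :=
  .of_norm_bounded ((lp_one_summable_prod_norm x).mul_left C) (norm_apply_lp_one_le hF x)

/-- The multilinear map `x ↦ ∑ₖ Fₖ((xᵢ(kᵢ))ᵢ)` on a product of `ℓ¹` spaces defined by a uniformly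
bounded family `F` of multilinear maps on the products of fibres. -/
noncomputable def lpOneMultilinear
    (F : ∀ k : ∀ i, β i, ContinuousMultilinearMap 𝕜 (fun i => E i (k i)) G)
    (hF : ∀ k, ‖F k‖ ≤ C) : ContinuousMultilinearMap 𝕜 (fun i => lp (E i) 1) G :=
  let term (k : ∀ i, β i) : ContinuousMultilinearMap 𝕜 (fun i => lp (E i) 1) G :=
    (F k).compContinuousLinearMap fun i => lp.evalCLM 𝕜 (E i) 1 (k i)
  MultilinearMap.mkContinuous
    { toFun x := ∑' k, term k x
      map_update_add' x i y z := by
        simp only [ContinuousMultilinearMap.map_update_add]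
        exact (summable_apply_lp_one hF _).tsum_add (summable_apply_lp_one hF _)
      map_update_smul' x i c y := by
        simp only [ContinuousMultilinearMap.map_update_smul]
        exact (summable_apply_lp_one hF _).tsum_const_smul c }
    |C| (norm_tsum_apply_lp_one_le hF)

lemma lpOneMultilinear_apply (hF : ∀ k, ‖F k‖ ≤ C) (x : ∀ i, lp (E i) 1) :
    lpOneMultilinear F hF x = ∑' k, F k fun i => x i (k i) :=
  rfl

end Multilinear

section Coordinates

variable {𝕜 γ : Type*} [NontriviallyNormedField 𝕜] {E : γ → Type*}
  [∀ c, NormedAddCommGroup (E c)] [∀ c, NormedSpace 𝕜 (E c)] {p : ℝ≥0∞} [Fact (1 ≤ p)]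

lemma lp_derivWithin_apply {a : 𝕜 → lp E p} {s : Set 𝕜} {t : 𝕜}
    (ha : DifferentiableWithinAt 𝕜 a s t) (hs : UniqueDiffWithinAt 𝕜 s t) (c : γ) :
    derivWithin (fun τ => a τ c) s t = derivWithin a s t c :=
  ((lp.evalCLM 𝕜 E p c).hasFDerivAt.comp_hasDerivWithinAt t ha.hasDerivWithinAt).derivWithin hs

end Coordinates

section ODE

variable {E : Type*} [NormedAddCommGroup E] [NormedSpace ℝ E] {v : E → E}

lemma exists_isIntegralCurveOn_Icc [CompleteSpace E] {x₀ : E} (hv : ContDiffAt ℝ 1 v x₀) (t₀ : ℝ) :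
    ∃ t₁ > t₀, ∃ γ : ℝ → E, γ t₀ = x₀ ∧ IsIntegralCurveOn γ (fun _ => v) (Icc t₀ t₁) := by
  obtain ⟨γ, hγ₀, ε, hε, hγ⟩ :=
    hv.exists_forall_mem_closedBall_exists_eq_forall_mem_Ioo_hasDerivAt₀ t₀
  refine ⟨t₀ + ε / 2, by linarith, γ, hγ₀, fun t ht => (hγ t ?_).hasDerivWithinAt⟩
  exact ⟨by linarith [ht.1], by linarith [ht.2]⟩

lemma eqOn_Icc_of_isIntegralCurveOn {γ₁ γ₂ : ℝ → E} {t₀ t₁ : ℝ} (hv : LocallyLipschitz v)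
    (h₁ : IsIntegralCurveOn γ₁ (fun _ => v) (Icc t₀ t₁))
    (h₂ : IsIntegralCurveOn γ₂ (fun _ => v) (Icc t₀ t₁)) (h₀ : γ₁ t₀ = γ₂ t₀) :
    EqOn γ₁ γ₂ (Icc t₀ t₁) := by
  have hcompact : IsCompact (γ₁ '' Icc t₀ t₁ ∪ γ₂ '' Icc t₀ t₁) :=
    (isCompact_Icc.image_of_continuousOn h₁.continuousOn).union
      (isCompact_Icc.image_of_continuousOn h₂.continuousOn)
  obtain ⟨K, hK⟩ := hv.locallyLipschitzOn.exists_lipschitzOnWith_of_compact hcompact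
  have right_deriv {γ : ℝ → E} (h : IsIntegralCurveOn γ (fun _ => v) (Icc t₀ t₁)) :
      ∀ t ∈ Ico t₀ t₁, HasDerivWithinAt γ (v (γ t)) (Ici t) t := fun t ht =>
    (h t (Ico_subset_Icc_self ht)).mono_of_mem_nhdsWithin (Icc_mem_nhdsGE_of_mem ht)
  exact ODE_solution_unique_of_mem_Icc_right (fun _ _ => hK)
    h₁.continuousOn (right_deriv h₁) (fun t ht => .inl ⟨t, Ico_subset_Icc_self ht, rfl⟩)
    h₂.continuousOn (right_deriv h₂) (fun t ht => .inr ⟨t, Ico_subset_Icc_self ht, rfl⟩) h₀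

lemma contDiffOn_of_isIntegralCurveOn_Icc {γ : ℝ → E} {t₀ t₁ : ℝ} {n : ℕ∞}
    [CompleteSpace E] (hv : ContDiff ℝ n v) (hγ : IsIntegralCurveOn γ (fun _ => v) (Icc t₀ t₁)) :
    ContDiffOn ℝ n γ (Icc t₀ t₁) :=
  ODE.contDiffOn_enat_Icc_of_hasDerivWithinAt (f := fun _ => v) (u := univ)
    (hv.comp contDiff_snd).contDiffOn hγ (mapsTo_univ _ _)

end ODE

section Resonant

local notation "ℓ¹(ℤ^" d ")" => lp (fun _ : Fin d → ℤ => ℂ) 1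

/-- The alternating product `z₀ \bar z₁ z₂ ⋯` as a real-multilinear form. -/
noncomputable def altProd (n : ℕ) : ContinuousMultilinearMap ℝ (fun _ : Fin n => ℂ) ℂ :=
  (ContinuousMultilinearMap.mkPiAlgebra ℝ (Fin n) ℂ).compContinuousLinearMap fun l =>
    if (l : ℕ) % 2 = 0 then .id ℝ ℂ else Complex.conjCLE

lemma norm_altProd_apply {n : ℕ} (z : Fin n → ℂ) : ‖altProd n z‖ = ∏ l, ‖z l‖ := by
  simp only [altProd, ContinuousMultilinearMap.compContinuousLinearMap_apply,
    ContinuousMultilinearMap.mkPiAlgebra_apply, norm_prod]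
  exact Finset.prod_congr rfl fun l _ => by split_ifs <;> simp

variable {σ d : ℕ}

lemma altProd_comp_eq_resProd (a : (Fin d → ℤ) → ℂ) (k : Fin (2 * σ + 1) → Fin d → ℤ) :
    altProd (2 * σ + 1) (fun l => a (k l)) = resProd σ d a k := by
  simp only [altProd, resProd, ContinuousMultilinearMap.compContinuousLinearMap_apply,
    ContinuousMultilinearMap.mkPiAlgebra_apply]
  exact Finset.prod_congr rfl fun l _ => by split_ifs <;> simp

lemma summable_norm_resProd (x : ℓ¹(ℤ^d)) : Summable fun k => ‖resProd σ d x k‖ := by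
  simpa only [← altProd_comp_eq_resProd, norm_altProd_apply] using
    lp_one_summable_prod_norm fun _ : Fin (2 * σ + 1) => x

/-- The alternating sum `k₁ - k₂ + k₃ - ⋯`: the only mode for which `k` can be resonant. -/
def altSum {M : Type*} [AddCommGroup M] {n : ℕ} (k : Fin n → M) : M :=
  ∑ l : Fin n, (-1 : ℤ) ^ (l : ℕ) • k l

lemma altSum_eq_of_mem_resSet {k : Fin (2 * σ + 1) → Fin d → ℤ} {j : Fin d → ℤ}
    (hk : k ∈ resSet σ d j) : altSum k = j :=
  hk.1

variable (σ d) in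
/-- The contribution of the tuple `k` to the right-hand side of the resonant system: the
alternating product, placed at the mode for which `k` is resonant, and zero if there is none. -/
noncomputable def resTerm (k : Fin (2 * σ + 1) → Fin d → ℤ) :
    ContinuousMultilinearMap ℝ (fun _ : Fin (2 * σ + 1) => ℂ) ℓ¹(ℤ^d) :=
  indicator {k | k ∈ resSet σ d (altSum k)}
    (fun k => (lp.singleContinuousLinearMap ℝ (fun _ : Fin d → ℤ => ℂ) 1
      (altSum k)).compContinuousMultilinearMap (altProd _)) k

lemma norm_resTerm_le_one (k : Fin (2 * σ + 1) → Fin d → ℤ) : ‖resTerm σ d k‖ ≤ 1 := by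
  refine ContinuousMultilinearMap.opNorm_le_bound zero_le_one fun z => ?_
  by_cases hk : k ∈ resSet σ d (altSum k)
  · simp [resTerm, hk, lp.norm_single, norm_altProd_apply]
  · simp [resTerm, hk, Finset.prod_nonneg]

lemma resTerm_apply_coord (k : Fin (2 * σ + 1) → Fin d → ℤ) (z : Fin (2 * σ + 1) → ℂ)
    (j : Fin d → ℤ) :
    resTerm σ d k z j = (resSet σ d j).indicator (fun _ => altProd _ z) k := by
  by_cases hj : altSum k = j
  · subst hj
    by_cases hk : k ∈ resSet σ d (altSum k) <;> simp [resTerm, hk]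
  · have hk : k ∉ resSet σ d j := fun h => hj (altSum_eq_of_mem_resSet h)
    by_cases hk' : k ∈ resSet σ d (altSum k) <;> simp [resTerm, hk, hk', Ne.symm hj]

variable (σ d) in
/-- The bounded multilinear map on `ℓ¹(ℤ^d)` whose diagonal is the right-hand side of the resonant
system. -/
noncomputable def resForm :
    ContinuousMultilinearMap ℝ (fun _ : Fin (2 * σ + 1) => ℓ¹(ℤ^d)) ℓ¹(ℤ^d) :=
  lpOneMultilinear (resTerm σ d) norm_resTerm_le_one

lemma resForm_diag_coord (x : ℓ¹(ℤ^d)) (j : Fin d → ℤ) :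
    resForm σ d (fun _ => x) j = ∑' k : resSet σ d j, resProd σ d x k := by
  have hsum : Summable fun k => resTerm σ d k fun l => x (k l) :=
    summable_apply_lp_one (E := fun _ _ => ℂ) norm_resTerm_le_one fun _ => x
  calc resForm σ d (fun _ => x) j
      = ∑' k, resTerm σ d k (fun l => x (k l)) j :=
        (lp.evalCLM ℝ (fun _ : Fin d → ℤ => ℂ) 1 j).map_tsum hsum
    _ = ∑' k, (resSet σ d j).indicator (fun k => resProd σ d x k) k :=
        tsum_congr fun k => by
          rw [resTerm_apply_coord]
          simp only [indicator, altProd_comp_eq_resProd]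
    _ = ∑' k : resSet σ d j, resProd σ d x k := (tsum_subtype _ _).symm

variable (σ d) in
/-- The vector field `x ↦ -i N(x)` on `ℓ¹(ℤ^d)` that turns the system `i ȧ = N(a)` into an ODE. -/
noncomputable def resField (x : ℓ¹(ℤ^d)) : ℓ¹(ℤ^d) :=
  -Complex.I • resForm σ d fun _ => x

lemma contDiff_resField {n : WithTop ℕ∞} : ContDiff ℝ n (resField σ d) :=
  ((resForm σ d).contDiff.comp (contDiff_pi.2 fun _ => contDiff_id)).const_smul (-Complex.I)

lemma eq_resField_iff {x y : ℓ¹(ℤ^d)} :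
    y = resField σ d x ↔ ∀ j, Complex.I * y j = ∑' k : resSet σ d j, resProd σ d x k := by
  have I_smul_eq_iff : y = resField σ d x ↔ Complex.I • y = resForm σ d fun _ => x := by
    rw [resField, ← Complex.inv_I, eq_inv_smul_iff₀ Complex.I_ne_zero]
  simp only [I_smul_eq_iff, lp.ext_iff, funext_iff, ← resForm_diag_coord, lp.coeFn_smul,
    Pi.smul_apply, smul_eq_mul]

lemma isIntegralCurveOn_resField_iff {a : ℝ → ℓ¹(ℤ^d)} {s : Set ℝ} (hs : UniqueDiffOn ℝ s)
    (ha : DifferentiableOn ℝ a s) :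
    IsIntegralCurveOn a (fun _ => resField σ d) s ↔
      ∀ j, ∀ t ∈ s, Complex.I * derivWithin (fun τ => a τ j) s t =
        ∑' k : resSet σ d j, resProd σ d (a t) k := by
  have hasDeriv_iff (t : ℝ) (ht : t ∈ s) :
      HasDerivWithinAt a (resField σ d (a t)) s t ↔ derivWithin a s t = resField σ d (a t) :=
    ⟨fun h => h.derivWithin (hs t ht), fun h => h ▸ (ha t ht).hasDerivWithinAt⟩
  calc IsIntegralCurveOn a (fun _ => resField σ d) s
      ↔ ∀ t ∈ s, derivWithin a s t = resField σ d (a t) := forall₂_congr hasDeriv_iff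
    _ ↔ ∀ t ∈ s, ∀ j, Complex.I * derivWithin (fun τ => a τ j) s t =
          ∑' k : resSet σ d j, resProd σ d (a t) k :=
        forall₂_congr fun t ht => by
          simp only [eq_resField_iff, lp_derivWithin_apply (ha t ht) (hs t ht)]
    _ ↔ _ := ⟨fun h j t ht => h t ht j, fun h t ht j => h j t ht⟩

end Resonant

/-- **Local existence and uniqueness for the resonant system
(Proposition 5.12 of [CDS10], cf. Lemma 2.3 of [CaFa12]).**
For `(α_j) ∈ ℓ¹(ℤ^d)` there are `T > 0` and a unique
`(a_j) ∈ C^∞([0,T]; ℓ¹(ℤ^d))` with `a_j(0) = α_j` solving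
`i ȧ_j = Σ_{(k₁,…,k_{2σ+1}) ∈ Res_j} a_{k₁} \bar a_{k₂} ⋯ a_{k_{2σ+1}}`,
the sum converging absolutely for each `t`. -/
theorem resonant_system_wellposedness (σ d : ℕ) (hσ : 1 ≤ σ) (hd : 1 ≤ d)
    (α : lp (fun _ : Fin d → ℤ => ℂ) 1) :
    ∃ T : ℝ, 0 < T ∧
      ∃ a : ℝ → lp (fun _ : Fin d → ℤ => ℂ) 1,
        (ContDiffOn ℝ (⊤ : ℕ∞) a (Set.Icc 0 T) ∧ a 0 = α ∧
          ∀ (j : Fin d → ℤ), ∀ t ∈ Set.Icc (0 : ℝ) T,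
            Summable (fun k : resSet σ d j => ‖resProd σ d (fun m => a t m) ↑k‖) ∧
            Complex.I * derivWithin (fun s => a s j) (Set.Icc 0 T) t
              = ∑' k : resSet σ d j, resProd σ d (fun m => a t m) ↑k) ∧
        ∀ b : ℝ → lp (fun _ : Fin d → ℤ => ℂ) 1,
          (ContDiffOn ℝ (⊤ : ℕ∞) b (Set.Icc 0 T) ∧ b 0 = α ∧
            ∀ (j : Fin d → ℤ), ∀ t ∈ Set.Icc (0 : ℝ) T,
              Summable (fun k : resSet σ d j => ‖resProd σ d (fun m => b t m) ↑k‖) ∧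
              Complex.I * derivWithin (fun s => b s j) (Set.Icc 0 T) t
                = ∑' k : resSet σ d j, resProd σ d (fun m => b t m) ↑k) →
          ∀ t ∈ Set.Icc (0 : ℝ) T, b t = a t := by
  obtain ⟨T, hT, a, ha0, ha⟩ :=
    exists_isIntegralCurveOn_Icc (contDiff_resField (σ := σ)).contDiffAt (x₀ := α) 0
  have ode_iff {b : ℝ → lp (fun _ : Fin d → ℤ => ℂ) 1} (hb : ContDiffOn ℝ (⊤ : ℕ∞) b (Icc 0 T)) :=
    isIntegralCurveOn_resField_iff (σ := σ) (uniqueDiffOn_Icc hT) (hb.differentiableOn (by simp))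
  have ha_smooth : ContDiffOn ℝ (⊤ : ℕ∞) a (Icc 0 T) :=
    contDiffOn_of_isIntegralCurveOn_Icc contDiff_resField ha
  refine ⟨T, hT, a, ⟨ha_smooth, ha0, fun j t ht => ⟨?_, (ode_iff ha_smooth).1 ha j t ht⟩⟩, ?_⟩
  · exact (summable_norm_resProd (a t)).subtype _
  · rintro b ⟨hb_smooth, hb0, hb⟩
    exact eqOn_Icc_of_isIntegralCurveOn contDiff_resField.locallyLipschitz
      ((ode_iff hb_smooth).2 fun j t ht => (hb j t ht).2) ha (hb0.trans ha0.symm)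
end

section
/- Let T > 0, ε ∈ (0,1], and let (a_j)_{j∈ℤ} ∈ C([0,T]; ℓ¹(ℤ, ℂ)) with α_j := a_j(0). Then the linear integral system b_j(t) = −i Σ_{(k,ℓ,m) ∈ Res_j} ∫_0^t (a_k \bar{a}_ℓ b_m + a_k \bar{b}_ℓ a_m + b_k \bar{a}_ℓ a_m)(τ) dτ − Σ_{k−ℓ+m=j, k²−ℓ²+m² ≠ j²} (2/(j²−k²+ℓ²−m²)) [ (a_k \bar{a}_ℓ a_m)(t) e^{i(j²−k²+ℓ²−m²) t/(2ε)} − α_k \bar{α}_ℓ α_m ] (j ∈ ℤ) has a unique solution (b_j^ε)_{j∈ℤ} ∈ C([0,T]; ℓ¹(ℤ, ℂ)). Moreover, sup_{ε∈(0,1]} ‖(b_j^ε)‖_{L^∞([0,T]; ℓ¹)} < ∞, i.e., the solutions are bounded in C([0,T]; ℓ¹) uniformly in ε. -/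
open MeasureTheory Filter Set
open scoped ENNReal NNReal

/-- The one-dimensional cubic resonant set
`Res_j = {(k,ℓ,m) ∈ ℤ³ : k − ℓ + m = j, k² − ℓ² + m² = j²}`. -/
def res1 (j : ℤ) : Set (ℤ × ℤ × ℤ) :=
  {p | p.1 - p.2.1 + p.2.2 = j ∧ p.1 ^ 2 - p.2.1 ^ 2 + p.2.2 ^ 2 = j ^ 2}

/-- The non-resonant triples: `k − ℓ + m = j` but `k² − ℓ² + m² ≠ j²`. -/
def nonres1 (j : ℤ) : Set (ℤ × ℤ × ℤ) :=
  {p | p.1 - p.2.1 + p.2.2 = j ∧ p.1 ^ 2 - p.2.1 ^ 2 + p.2.2 ^ 2 ≠ j ^ 2}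

/-- `b` solves the linear corrector system (with data `a` and parameter `ε`) on
`[0,T]`, both sums being required to converge absolutely:
`b_j(t) = −i Σ_{(k,ℓ,m)∈Res_j} ∫_0^t (a_k \bar a_ℓ b_m + a_k \bar b_ℓ a_m + b_k \bar a_ℓ a_m) dτ`
`− Σ_{k−ℓ+m=j, k²−ℓ²+m²≠j²} (2/(j²−k²+ℓ²−m²)) [(a_k \bar a_ℓ a_m)(t) e^{i(j²−k²+ℓ²−m²)t/(2ε)} − α_k \bar α_ℓ α_m]`,
where `α = a(0)`. -/
def SolvesCorrector (T ε : ℝ) (a b : ℝ → lp (fun _ : ℤ => ℂ) 1) : Prop :=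
  ∀ (j : ℤ), ∀ t ∈ Set.Icc (0 : ℝ) T,
    Summable (fun p : res1 j =>
      ‖∫ τ in (0 : ℝ)..t,
          (a τ (↑p : ℤ × ℤ × ℤ).1 * (starRingEnd ℂ) (a τ (↑p : ℤ × ℤ × ℤ).2.1)
              * b τ (↑p : ℤ × ℤ × ℤ).2.2
            + a τ (↑p : ℤ × ℤ × ℤ).1 * (starRingEnd ℂ) (b τ (↑p : ℤ × ℤ × ℤ).2.1)
              * a τ (↑p : ℤ × ℤ × ℤ).2.2
            + b τ (↑p : ℤ × ℤ × ℤ).1 * (starRingEnd ℂ) (a τ (↑p : ℤ × ℤ × ℤ).2.1)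
              * a τ (↑p : ℤ × ℤ × ℤ).2.2)‖) ∧
    Summable (fun p : nonres1 j =>
      ‖(2 / ((j ^ 2 - (↑p : ℤ × ℤ × ℤ).1 ^ 2 + (↑p : ℤ × ℤ × ℤ).2.1 ^ 2
              - (↑p : ℤ × ℤ × ℤ).2.2 ^ 2 : ℤ) : ℂ))
          * ((a t (↑p : ℤ × ℤ × ℤ).1 * (starRingEnd ℂ) (a t (↑p : ℤ × ℤ × ℤ).2.1)
                * a t (↑p : ℤ × ℤ × ℤ).2.2)
              * Complex.exp (Complex.I * ((j ^ 2 - (↑p : ℤ × ℤ × ℤ).1 ^ 2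
                  + (↑p : ℤ × ℤ × ℤ).2.1 ^ 2 - (↑p : ℤ × ℤ × ℤ).2.2 ^ 2 : ℤ) : ℂ)
                  * t / (2 * ε))
            - a 0 (↑p : ℤ × ℤ × ℤ).1 * (starRingEnd ℂ) (a 0 (↑p : ℤ × ℤ × ℤ).2.1)
                * a 0 (↑p : ℤ × ℤ × ℤ).2.2)‖) ∧
    b t j
      = -Complex.I * ∑' p : res1 j,
          (∫ τ in (0 : ℝ)..t,
            (a τ (↑p : ℤ × ℤ × ℤ).1 * (starRingEnd ℂ) (a τ (↑p : ℤ × ℤ × ℤ).2.1)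
                * b τ (↑p : ℤ × ℤ × ℤ).2.2
              + a τ (↑p : ℤ × ℤ × ℤ).1 * (starRingEnd ℂ) (b τ (↑p : ℤ × ℤ × ℤ).2.1)
                * a τ (↑p : ℤ × ℤ × ℤ).2.2
              + b τ (↑p : ℤ × ℤ × ℤ).1 * (starRingEnd ℂ) (a τ (↑p : ℤ × ℤ × ℤ).2.1)
                * a τ (↑p : ℤ × ℤ × ℤ).2.2))
        - ∑' p : nonres1 j,
            (2 / ((j ^ 2 - (↑p : ℤ × ℤ × ℤ).1 ^ 2 + (↑p : ℤ × ℤ × ℤ).2.1 ^ 2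
                - (↑p : ℤ × ℤ × ℤ).2.2 ^ 2 : ℤ) : ℂ))
              * ((a t (↑p : ℤ × ℤ × ℤ).1 * (starRingEnd ℂ) (a t (↑p : ℤ × ℤ × ℤ).2.1)
                    * a t (↑p : ℤ × ℤ × ℤ).2.2)
                  * Complex.exp (Complex.I * ((j ^ 2 - (↑p : ℤ × ℤ × ℤ).1 ^ 2
                      + (↑p : ℤ × ℤ × ℤ).2.1 ^ 2 - (↑p : ℤ × ℤ × ℤ).2.2 ^ 2 : ℤ) : ℂ)
                      * t / (2 * ε))
                - a 0 (↑p : ℤ × ℤ × ℤ).1 * (starRingEnd ℂ) (a 0 (↑p : ℤ × ℤ × ℤ).2.1)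
                    * a 0 (↑p : ℤ × ℤ × ℤ).2.2)

/-!
Let `N` be the resonant part of the cubic nonlinearity, a bounded real-trilinear form on `ℓ¹`
evaluated on the diagonal. The resonant sum of the corrector system is the integral of
`A(τ) b(τ)`, where `A(τ) = -i DN(a(τ))`, so the system is the linear Volterra equation
`b(t) = F_ε(t) + ∫₀ᵗ A(τ) b(τ) dτ` in `ℓ¹`. With `M = sup ‖A‖`, the powers of the Volterra operator
`V` satisfy `‖Vⁿ‖ ≤ (M T)ⁿ / n!`, so `1 - V` is inverted by its Neumann series, with inverse of norm
at most `e^{M T}`. Neither `V` nor this bound involves `ε`. Off resonance the phase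
`j² - k² + ℓ² - m²` is a nonzero integer and the exponential is unimodular, so
`‖F_ε(t)‖ ≤ 4 sup ‖a‖³` for every `ε`.
-/

theorem exists_inverse_one_sub_of_norm_pow_le {R : Type*} [NormedRing R] [CompleteSpace R] {x : R}
    {c : ℝ} (hx : ∀ n : ℕ, ‖x ^ n‖ ≤ c ^ n / n.factorial) :
    ∃ y : R, (1 - x) * y = 1 ∧ y * (1 - x) = 1 ∧ ‖y‖ ≤ Real.exp c := by
  have hexp : HasSum (fun n : ℕ => c ^ n / n.factorial) (Real.exp c) := by
    rw [Real.exp_eq_exp_ℝ]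
    exact NormedSpace.expSeries_div_hasSum_exp _
  have hsum : Summable (x ^ ·) := .of_norm_bounded hexp.summable hx
  exact ⟨∑' n, x ^ n, hsum.one_sub_mul_tsum_pow, hsum.tsum_pow_mul_one_sub,
    tsum_of_norm_bounded hexp hx⟩

section Volterra

variable {E : Type*} [NormedAddCommGroup E] [NormedSpace ℝ E] {T : ℝ}

theorem continuous_IccExtend_clm_apply (hT : 0 ≤ T) (A : C(Icc 0 T, E →L[ℝ] E))
    (u : C(Icc 0 T, E)) : Continuous fun τ => A.IccExtend hT τ (u.IccExtend hT τ) :=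
  (A.IccExtend hT).continuous.clm_apply (u.IccExtend hT).continuous

/-- The Volterra operator `(V u)(t) = ∫₀ᵗ A(τ) u(τ) dτ` on `C([0,T]; E)`; the integrand is extended
constantly outside `[0,T]` to make sense of the integral over a subset of `ℝ`. -/
noncomputable def volterraOperator (hT : 0 ≤ T) (A : C(Icc 0 T, E →L[ℝ] E)) :
    C(Icc 0 T, E) →L[ℝ] C(Icc 0 T, E) :=
  LinearMap.mkContinuous
    { toFun u :=
        ⟨fun t => ∫ τ in (0 : ℝ)..t, A.IccExtend hT τ (u.IccExtend hT τ),
          (intervalIntegral.continuous_primitive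
            (continuous_IccExtend_clm_apply hT A u).intervalIntegrable 0).comp
              continuous_subtype_val⟩
      map_add' u v := by
        ext t
        simp only [ContinuousMap.coe_mk, ContinuousMap.add_apply, ContinuousMap.coe_IccExtend,
          IccExtend_apply, map_add]
        exact intervalIntegral.integral_add
          ((continuous_IccExtend_clm_apply hT A u).intervalIntegrable _ _)
          ((continuous_IccExtend_clm_apply hT A v).intervalIntegrable _ _)
      map_smul' c u := by
        ext t
        simp only [ContinuousMap.coe_mk, ContinuousMap.smul_apply, ContinuousMap.coe_IccExtend,
          IccExtend_apply, map_smul, RingHom.id_apply, intervalIntegral.integral_smul] }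
    (‖A‖ * T) fun u => by
      refine (ContinuousMap.norm_le _ (by positivity)).2 fun t => ?_
      calc ‖∫ τ in (0 : ℝ)..t, A.IccExtend hT τ (u.IccExtend hT τ)‖
          ≤ ‖A‖ * ‖u‖ * |(t : ℝ) - 0| :=
            intervalIntegral.norm_integral_le_of_norm_le_const fun τ _ =>
              (A.IccExtend hT τ).le_of_opNorm_le_of_le (A.norm_coe_le_norm _) (u.norm_coe_le_norm _)
        _ ≤ ‖A‖ * ‖u‖ * T := by
            rw [sub_zero, abs_of_nonneg t.2.1]
            exact mul_le_mul_of_nonneg_left t.2.2 (by positivity)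
        _ = ‖A‖ * T * ‖u‖ := by ring

theorem volterraOperator_apply (hT : 0 ≤ T) (A : C(Icc 0 T, E →L[ℝ] E)) (u : C(Icc 0 T, E))
    (t : Icc 0 T) :
    volterraOperator hT A u t = ∫ τ in (0 : ℝ)..t, A.IccExtend hT τ (u.IccExtend hT τ) :=
  rfl

theorem integral_mul_pow_div_factorial (M : ℝ) (n : ℕ) (t : ℝ) :
    ∫ τ in (0 : ℝ)..t, M * ((M * τ) ^ n / n.factorial) = (M * t) ^ (n + 1) / (n + 1).factorial := by
  have hmonomial (τ : ℝ) :
      M * ((M * τ) ^ n / n.factorial) = M ^ (n + 1) / n.factorial * τ ^ n := by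
    rw [mul_pow]; ring
  simp only [hmonomial, intervalIntegral.integral_const_mul, integral_pow]
  rw [zero_pow n.succ_ne_zero, sub_zero, mul_pow, Nat.factorial_succ, Nat.cast_mul, Nat.cast_succ]
  field_simp

theorem norm_volterraOperator_pow_apply_le (hT : 0 ≤ T) (A : C(Icc 0 T, E →L[ℝ] E))
    (u : C(Icc 0 T, E)) (n : ℕ) (t : Icc 0 T) :
    ‖(volterraOperator hT A ^ n) u t‖ ≤ (‖A‖ * t) ^ n / n.factorial * ‖u‖ := by
  induction n generalizing t with
  | zero => simpa using u.norm_coe_le_norm t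
  | succ n ih =>
    rw [pow_succ', mul_apply_eq_comp, volterraOperator_apply,
      ← integral_mul_pow_div_factorial, ← intervalIntegral.integral_mul_const]
    refine intervalIntegral.norm_integral_le_of_norm_le t.2.1 (ae_of_all _ fun τ hτ => ?_)
      (by apply Continuous.intervalIntegrable; fun_prop)
    have hτT : τ ∈ Icc 0 T := ⟨hτ.1.le, hτ.2.trans t.2.2⟩
    simp only [ContinuousMap.coe_IccExtend, IccExtend_of_mem hT _ hτT, mul_assoc]
    simpa only [mul_assoc] using
      (A ⟨τ, hτT⟩).le_of_opNorm_le_of_le (A.norm_coe_le_norm _) (ih ⟨τ, hτT⟩)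

theorem norm_volterraOperator_pow_le (hT : 0 ≤ T) (A : C(Icc 0 T, E →L[ℝ] E)) (n : ℕ) :
    ‖volterraOperator hT A ^ n‖ ≤ (‖A‖ * T) ^ n / n.factorial := by
  refine ContinuousLinearMap.opNorm_le_bound _ (by positivity) fun u =>
    (ContinuousMap.norm_le _ (by positivity)).2 fun t =>
      (norm_volterraOperator_pow_apply_le hT A u n t).trans ?_
  have := t.2.1
  gcongr
  exact t.2.2

theorem exists_inverse_one_sub_volterraOperator [CompleteSpace E] (hT : 0 ≤ T)
    (A : C(Icc 0 T, E →L[ℝ] E)) :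
    ∃ R : C(Icc 0 T, E) →L[ℝ] C(Icc 0 T, E), (1 - volterraOperator hT A) * R = 1 ∧
      R * (1 - volterraOperator hT A) = 1 ∧ ‖R‖ ≤ Real.exp (‖A‖ * T) :=
  exists_inverse_one_sub_of_norm_pow_le (R := C(Icc 0 T, E) →L[ℝ] C(Icc 0 T, E))
    (norm_volterraOperator_pow_le hT A)

/-- `b` solves the linear Volterra equation `b(t) = F(t) + ∫₀ᵗ A(τ) b(τ) dτ` on `[0,T]`. -/
def SolvesVolterra (T : ℝ) (A : ℝ → E →L[ℝ] E) (F b : ℝ → E) : Prop :=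
  ∀ t ∈ Icc 0 T, b t = F t + ∫ τ in (0 : ℝ)..t, A τ (b τ)

theorem solvesVolterra_iff (hT : 0 ≤ T) {A : ℝ → E →L[ℝ] E} {F b : ℝ → E}
    (hA : ContinuousOn A (Icc 0 T)) (hF : ContinuousOn F (Icc 0 T))
    (hb : ContinuousOn b (Icc 0 T)) :
    SolvesVolterra T A F b ↔
      (1 - volterraOperator hT ⟨_, hA.domRestrict⟩) ⟨_, hb.domRestrict⟩ = ⟨_, hF.domRestrict⟩ := by
  rw [ContinuousMap.ext_iff, Subtype.forall]
  refine forall₂_congr fun t ht => ?_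
  have hintegral : ∫ τ in (0 : ℝ)..t, A τ (b τ) =
      volterraOperator hT ⟨_, hA.domRestrict⟩ ⟨_, hb.domRestrict⟩ ⟨t, ht⟩ := by
    refine intervalIntegral.integral_congr fun τ hτ => ?_
    rw [uIcc_of_le ht.1] at hτ
    have hτT : τ ∈ Icc 0 T := Icc_subset_Icc_right ht.2 hτ
    simp only [ContinuousMap.coe_IccExtend, IccExtend_of_mem hT _ hτT, ContinuousMap.coe_mk,
      domRestrict_apply]
  rw [hintegral]
  exact sub_eq_iff_eq_add.symm

theorem solvesVolterra_wellposed [CompleteSpace E] (hT : 0 ≤ T) {A : ℝ → E →L[ℝ] E} {M : ℝ}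
    (hA : ContinuousOn A (Icc 0 T)) (hAM : ∀ t ∈ Icc 0 T, ‖A t‖ ≤ M) {F : ℝ → E} {K : ℝ}
    (hF : ContinuousOn F (Icc 0 T)) (hFK : ∀ t ∈ Icc 0 T, ‖F t‖ ≤ K) :
    ∃ b : ℝ → E, (ContinuousOn b (Icc 0 T) ∧ SolvesVolterra T A F b) ∧
      (∀ c : ℝ → E, ContinuousOn c (Icc 0 T) → SolvesVolterra T A F c → EqOn c b (Icc 0 T)) ∧
      ∀ t ∈ Icc 0 T, ‖b t‖ ≤ Real.exp (M * T) * K := by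
  obtain ⟨R, hR, hR', hRnorm⟩ := exists_inverse_one_sub_volterraOperator hT ⟨_, hA.domRestrict⟩
  let φ : C(Icc 0 T, E) := ⟨_, hF.domRestrict⟩
  have hb : ContinuousOn ((R φ).IccExtend hT) (Icc 0 T) := (ContinuousMap.continuous _).continuousOn
  have hrestrict : ⟨_, hb.domRestrict⟩ = R φ := by
    ext t
    exact IccExtend_val hT _ t
  refine ⟨(R φ).IccExtend hT, ⟨hb, ?_⟩, fun c hc hcF => ?_, fun t _ => ?_⟩
  · rw [solvesVolterra_iff hT hA hF hb, hrestrict]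
    exact DFunLike.congr_fun hR φ
  · have hcR : ⟨_, hc.domRestrict⟩ = R φ :=
      (DFunLike.congr_fun hR' ⟨_, hc.domRestrict⟩).symm.trans
        (congrArg R ((solvesVolterra_iff hT hA hF hc).1 hcF))
    exact fun t ht => (DFunLike.congr_fun hcR ⟨t, ht⟩).trans (IccExtend_of_mem hT _ ht).symm
  · have h0 : (0 : ℝ) ∈ Icc 0 T := ⟨le_rfl, hT⟩
    have hM0 : 0 ≤ M := (norm_nonneg _).trans (hAM 0 h0)
    have hK0 : 0 ≤ K := (norm_nonneg _).trans (hFK 0 h0)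
    have hα : ‖(⟨_, hA.domRestrict⟩ : C(Icc 0 T, E →L[ℝ] E))‖ ≤ M :=
      (ContinuousMap.norm_le _ hM0).2 fun t => hAM t t.2
    have hφ : ‖φ‖ ≤ K := (ContinuousMap.norm_le _ hK0).2 fun t => hFK t t.2
    refine ((R φ).norm_coe_le_norm _).trans (R.le_of_opNorm_le_of_le (hRnorm.trans ?_) hφ)
    gcongr

end Volterra

theorem tendsto_multilinear_apply {𝕜 X κ G : Type*} {E : κ → Type*} [NontriviallyNormedField 𝕜]
    [Fintype κ] [∀ i, NormedAddCommGroup (E i)] [∀ i, NormedSpace 𝕜 (E i)] [NormedAddCommGroup G]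
    [NormedSpace 𝕜 G] {f : X → ContinuousMultilinearMap 𝕜 E G} {m : X → ∀ i, E i} {m₀ : ∀ i, E i}
    {y : G} {l : Filter X} {C : ℝ} (hfC : ∀ x, ‖f x‖ ≤ C)
    (hf : Tendsto (fun x => f x m₀) l (nhds y)) (hm : Tendsto m l (nhds m₀)) :
    Tendsto (fun x => f x (m x)) l (nhds y) := by
  have hdiff : Tendsto (fun x => f x (m x) - f x m₀) l (nhds 0) := by
    refine squeeze_zero_norm
      (a := fun x => C * Fintype.card κ * max ‖m x‖ ‖m₀‖ ^ (Fintype.card κ - 1) * ‖m x - m₀‖)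
      (fun x => ((f x).norm_image_sub_le _ _).trans (by gcongr; exact hfC x)) ?_
    simpa using ((((hm.norm.max tendsto_const_nhds).pow (Fintype.card κ - 1)).const_mul
      (C * Fintype.card κ)).mul (hm.sub_const m₀).norm)
  simpa using hdiff.add hf

theorem hasSum_norm_lp_one {ι : Type*} {E : ι → Type*} [∀ i, NormedAddCommGroup (E i)]
    (x : lp E 1) : HasSum (fun i => ‖x i‖) ‖x‖ := by
  simpa using lp.hasSum_norm (by simp) x

theorem fderiv_multilinear_diag_apply {𝕜 κ E G : Type*} [NontriviallyNormedField 𝕜] [Fintype κ]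
    [DecidableEq κ] [NormedAddCommGroup E] [NormedSpace 𝕜 E] [NormedAddCommGroup G]
    [NormedSpace 𝕜 G] (f : ContinuousMultilinearMap 𝕜 (fun _ : κ => E) G) (x y : E) :
    fderiv 𝕜 (fun z => f fun _ => z) x y = ∑ i, f (Function.update (fun _ => x) i y) := by
  have hdiag : HasFDerivAt (fun z : E => f fun _ => z)
      (f.linearDeriv (fun _ => x) ∘L .pi fun _ => .id 𝕜 E) x :=
    (f.hasFDerivAt fun _ => x).comp x
      (ContinuousLinearMap.pi fun _ : κ => ContinuousLinearMap.id 𝕜 E).hasFDerivAt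
  simp only [hdiag.fderiv, ContinuousLinearMap.comp_apply,
    ContinuousMultilinearMap.linearDeriv_apply, ContinuousLinearMap.pi_apply,
    ContinuousLinearMap.id_apply]

theorem integral_sum_multilinear_apply {ι κ G : Type*} {E : κ → Type*} [Fintype ι]
    [∀ k, NormedAddCommGroup (E k)] [∀ k, NormedSpace ℝ (E k)] [NormedAddCommGroup G]
    [NormedSpace ℝ G] (f : ContinuousMultilinearMap ℝ E G) {s t : ℝ} {m : ι → ℝ → ∀ k, E k}
    (hm : ∀ i, ContinuousOn (m i) (uIcc s t)) :
    ∫ τ in s..t, ∑ i, f (m i τ) = ∑ i, ∫ τ in s..t, f (m i τ) :=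
  intervalIntegral.integral_finsetSum fun i _ =>
    (f.cont.comp_continuousOn (hm i)).intervalIntegrable

section CubicForm

variable {ι 𝕜 : Type*} [RCLike 𝕜]

/-- The monomial `x_k * conj y_ℓ * z_m` in the coordinates of `(x, y, z)`, for `p = (k, ℓ, m)`. It
is only real-multilinear, because of the conjugate. -/
noncomputable def cubicMonomial (p : ι × ι × ι) :
    ContinuousMultilinearMap ℝ (fun _ : Fin 3 => lp (fun _ : ι => 𝕜) 1) 𝕜 :=
  (ContinuousMultilinearMap.mkPiAlgebra ℝ (Fin 3) 𝕜).compContinuousLinearMap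
    ![lp.evalCLM ℝ _ 1 p.1, (RCLike.conjCLE (K := 𝕜) : 𝕜 →L[ℝ] 𝕜) ∘L lp.evalCLM ℝ _ 1 p.2.1,
      lp.evalCLM ℝ _ 1 p.2.2]

theorem cubicMonomial_apply (p : ι × ι × ι) (m : Fin 3 → lp (fun _ : ι => 𝕜) 1) :
    cubicMonomial p m = m 0 p.1 * (starRingEnd 𝕜) (m 1 p.2.1) * m 2 p.2.2 := by
  simp only [cubicMonomial, ContinuousMultilinearMap.compContinuousLinearMap_apply,
    ContinuousMultilinearMap.mkPiAlgebra_apply, Fin.prod_univ_three]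
  rfl

theorem hasSum_norm_cubicMonomial (m : Fin 3 → lp (fun _ : ι => 𝕜) 1) :
    HasSum (fun p => ‖cubicMonomial p m‖) (∏ i, ‖m i‖) := by
  have h (i : Fin 3) := hasSum_norm_lp_one (m i)
  have hnonneg (i : Fin 3) : 0 ≤ fun k => ‖m i k‖ := fun _ => norm_nonneg _
  have h₁₂ := (h 1).mul (h 2) ((h 1).summable.mul_of_nonneg (h 2).summable (hnonneg 1) (hnonneg 2))
  have h₀₁₂ := (h 0).mul h₁₂ ((h 0).summable.mul_of_nonneg h₁₂.summable (hnonneg 0)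
    fun _ => mul_nonneg (norm_nonneg _) (norm_nonneg _))
  simpa only [cubicMonomial_apply, norm_mul, RCLike.norm_conj, Fin.prod_univ_three, mul_assoc]
    using h₀₁₂

variable [DecidableEq ι] (out : ι × ι × ι → ι) (w : lp (fun _ : ι × ι × ι => 𝕜) ∞)

theorem norm_single_mul_cubicMonomial_le (m : Fin 3 → lp (fun _ : ι => 𝕜) 1) (p : ι × ι × ι) :
    ‖lp.single (E := fun _ : ι => 𝕜) 1 (out p) (w p * cubicMonomial p m)‖ ≤
      ‖w‖ * ‖cubicMonomial p m‖ := by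
  rw [lp.norm_single one_pos, norm_mul]
  gcongr
  exact lp.norm_apply_le_norm ENNReal.top_ne_zero w p

theorem summable_single_mul_cubicMonomial (m : Fin 3 → lp (fun _ : ι => 𝕜) 1) :
    Summable fun p => lp.single (E := fun _ : ι => 𝕜) 1 (out p) (w p * cubicMonomial p m) :=
  .of_norm_bounded ((hasSum_norm_cubicMonomial m).summable.mul_left ‖w‖)
    (norm_single_mul_cubicMonomial_le out w m)

theorem norm_tsum_single_mul_cubicMonomial_le (m : Fin 3 → lp (fun _ : ι => 𝕜) 1) :
    ‖∑' p, lp.single (E := fun _ : ι => 𝕜) 1 (out p) (w p * cubicMonomial p m)‖ ≤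
      ‖w‖ * ∏ i, ‖m i‖ :=
  tsum_of_norm_bounded ((hasSum_norm_cubicMonomial m).mul_left ‖w‖)
    (norm_single_mul_cubicMonomial_le out w m)

/-- The cubic interaction on `ℓ¹` with bounded weights `w`: the `j`-th coordinate of its value at
`(x, y, z)` is the sum of `w_p * x_k * conj y_ℓ * z_m` over all triples `p = (k, ℓ, m)` with
`out p = j`. -/
noncomputable def cubicForm :
    ContinuousMultilinearMap ℝ (fun _ : Fin 3 => lp (fun _ : ι => 𝕜) 1) (lp (fun _ : ι => 𝕜) 1) :=
  MultilinearMap.mkContinuous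
    { toFun m := ∑' p, lp.single 1 (out p) (w p * cubicMonomial p m)
      map_update_add' m i x y := by
        simp only [ContinuousMultilinearMap.map_update_add, mul_add, lp.single_add]
        exact (summable_single_mul_cubicMonomial out w _).tsum_add
          (summable_single_mul_cubicMonomial out w _)
      map_update_smul' m i c x := by
        simp only [ContinuousMultilinearMap.map_update_smul, mul_smul_comm, lp.single_smul]
        exact (summable_single_mul_cubicMonomial out w _).tsum_const_smul c }
    ‖w‖ (norm_tsum_single_mul_cubicMonomial_le out w)

theorem norm_cubicForm_le : ‖cubicForm out w‖ ≤ ‖w‖ :=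
  MultilinearMap.mkContinuous_norm_le _ (norm_nonneg _) _

theorem hasSum_cubicForm (m : Fin 3 → lp (fun _ : ι => 𝕜) 1) :
    HasSum (fun p => lp.single 1 (out p) (w p * cubicMonomial p m)) (cubicForm out w m) :=
  (summable_single_mul_cubicMonomial out w m).hasSum

theorem hasSum_integral_cubicForm [Countable ι] {s t : ℝ} {m : ℝ → Fin 3 → lp (fun _ : ι => 𝕜) 1}
    (hm : ContinuousOn m (uIcc s t)) :
    HasSum (fun p => lp.single (E := fun _ : ι => 𝕜) 1 (out p)
        (w p * ∫ τ in s..t, cubicMonomial p (m τ)))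
      (∫ τ in s..t, cubicForm out w (m τ)) := by
  have hmonomial (p : ι × ι × ι) :
      ContinuousOn (fun τ => w p * cubicMonomial p (m τ)) (uIcc s t) :=
    continuousOn_const.mul ((cubicMonomial p).cont.comp_continuousOn hm)
  have hsingle (p : ι × ι × ι) :
      lp.single (E := fun _ : ι => 𝕜) 1 (out p) (w p * ∫ τ in s..t, cubicMonomial p (m τ)) =
      ∫ τ in s..t, lp.single (E := fun _ : ι => 𝕜) 1 (out p) (w p * cubicMonomial p (m τ)) := by
    rw [← intervalIntegral.integral_const_mul]
    exact ((lp.singleContinuousLinearMap ℝ (fun _ : ι => 𝕜) 1 (out p)).intervalIntegral_comp_comm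
      (hmonomial p).intervalIntegrable).symm
  have hnorm (τ : ℝ) := (hasSum_norm_cubicMonomial (m τ)).mul_left ‖w‖
  simp only [hsingle]
  refine intervalIntegral.hasSum_integral_of_dominated_convergence
    (fun p τ => ‖w‖ * ‖cubicMonomial p (m τ)‖) (fun p => ?_)
    (fun p => ae_of_all _ fun τ _ => norm_single_mul_cubicMonomial_le out w (m τ) p)
    (ae_of_all _ fun τ _ => (hnorm τ).summable) ?_
    (ae_of_all _ fun τ _ => hasSum_cubicForm out w (m τ))
  · exact ((lp.singleContinuousLinearMap ℝ (fun _ : ι => 𝕜) 1 (out p)).continuous.comp_continuousOn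
      ((hmonomial p).mono uIoc_subset_uIcc)).aestronglyMeasurable measurableSet_uIoc
  · simp only [(hnorm _).tsum_eq]
    apply ContinuousOn.intervalIntegrable
    fun_prop

variable {out w} in
theorem hasSum_subtype_coord_of_hasSum_single {j : ι} {S : Set (ι × ι × ι)}
    (hS : ∀ p, p ∈ S ↔ out p = j ∧ w p ≠ 0) {f : ι × ι × ι → 𝕜} {x : lp (fun _ : ι => 𝕜) 1}
    (hx : HasSum (fun p => lp.single (E := fun _ : ι => 𝕜) 1 (out p) (w p * f p)) x) :
    HasSum (fun p : S => w p * f p) (x j) := by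
  refine (hasSum_subtype_iff_indicator (f := fun p => w p * f p)).2 ?_
  refine (hx.mapL (lp.evalCLM 𝕜 (fun _ : ι => 𝕜) 1 j)).congr_fun fun p => ?_
  change _ = lp.single (E := fun _ : ι => 𝕜) 1 (out p) (w p * f p) j
  by_cases hp : p ∈ S
  · rw [indicator_of_mem hp, ← ((hS p).1 hp).1, lp.single_apply_self]
  · rw [indicator_of_notMem hp]
    obtain hout | hw := not_and_or.1 (mt (hS p).2 hp)
    · exact (lp.single_apply_ne (E := fun _ : ι => 𝕜) 1 _ _ (Ne.symm hout)).symm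
    · rw [not_not.1 hw, zero_mul, lp.single_zero, lp.coeFn_zero, Pi.zero_apply]

theorem continuousOn_cubicForm {X : Type*} [TopologicalSpace X] {s : Set X}
    {W : X → lp (fun _ : ι × ι × ι => 𝕜) ∞} {C : ℝ} (hWC : ∀ x, ‖W x‖ ≤ C)
    (hW : ∀ p, Continuous fun x => W x p) {m : X → Fin 3 → lp (fun _ : ι => 𝕜) 1}
    (hm : ContinuousOn m s) : ContinuousOn (fun x => cubicForm out (W x) (m x)) s := by
  have hfixed (m₀ : Fin 3 → lp (fun _ : ι => 𝕜) 1) :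
      Continuous fun x => cubicForm out (W x) m₀ := by
    refine continuous_tsum (fun p => ?_)
      ((hasSum_norm_cubicMonomial m₀).summable.mul_left C) fun p x =>
        (norm_single_mul_cubicMonomial_le out (W x) m₀ p).trans (by gcongr; exact hWC x)
    exact (lp.singleContinuousLinearMap ℝ (fun _ : ι => 𝕜) 1 (out p)).continuous.comp
      ((hW p).mul continuous_const)
  exact fun x hx => tendsto_multilinear_apply (fun y => (norm_cubicForm_le out (W y)).trans (hWC y))
    (hfixed (m x)).continuousWithinAt (hm x hx)

end CubicForm

section Corrector

/-- The frequency `k - ℓ + m` generated by the interaction of the triple `(k, ℓ, m)`. -/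
def outputFrequency (p : ℤ × ℤ × ℤ) : ℤ := p.1 - p.2.1 + p.2.2

/-- The phase `j² - k² + ℓ² - m²` of the triple `(k, ℓ, m)` in the equation for its output frequency
`j = k - ℓ + m`. -/
def phase (p : ℤ × ℤ × ℤ) : ℤ := outputFrequency p ^ 2 - p.1 ^ 2 + p.2.1 ^ 2 - p.2.2 ^ 2

/-- The weights of the resonant cubic nonlinearity: the indicator of the resonant triples. -/
noncomputable def resonantWeight : lp (fun _ : ℤ × ℤ × ℤ => ℂ) ∞ :=
  ⟨fun p => if phase p = 0 then 1 else 0, memℓp_infty ⟨1, forall_mem_range.2 fun p => by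
    dsimp only
    split_ifs <;> simp⟩⟩

theorem norm_two_div_intCast_mul_exp_le (n : ℤ) (t ε : ℝ) :
    ‖2 / (n : ℂ) * Complex.exp (Complex.I * n * t / (2 * ε))‖ ≤ 2 := by
  have hunimodular : ‖Complex.exp (Complex.I * n * t / (2 * ε))‖ = 1 := by
    convert Complex.norm_exp_ofReal_mul_I (n * t / (2 * ε)) using 3
    push_cast
    ring
  rw [norm_mul, hunimodular, mul_one, norm_div, RCLike.norm_ofNat, Complex.norm_intCast]
  obtain rfl | hn := eq_or_ne n 0
  · simp
  · exact div_le_self zero_le_two (mod_cast Int.one_le_abs hn)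

/-- The oscillating weights of the nonresonant sum at time `t`. They vanish on the resonant triples,
because division by zero gives zero. -/
noncomputable def nonresonantWeight (ε t : ℝ) : lp (fun _ : ℤ × ℤ × ℤ => ℂ) ∞ :=
  ⟨fun p => 2 / (phase p : ℂ) * Complex.exp (Complex.I * phase p * t / (2 * ε)),
    memℓp_infty ⟨2, forall_mem_range.2 fun p => norm_two_div_intCast_mul_exp_le (phase p) t ε⟩⟩

theorem nonresonantWeight_apply (ε t : ℝ) (p : ℤ × ℤ × ℤ) : nonresonantWeight ε t p =
    2 / (phase p : ℂ) * Complex.exp (Complex.I * phase p * t / (2 * ε)) :=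
  rfl

theorem norm_nonresonantWeight_le (ε t : ℝ) : ‖nonresonantWeight ε t‖ ≤ 2 :=
  lp.norm_le_of_forall_le zero_le_two fun p => norm_two_div_intCast_mul_exp_le (phase p) t ε

theorem continuous_nonresonantWeight_apply (ε : ℝ) (p : ℤ × ℤ × ℤ) :
    Continuous fun t => nonresonantWeight ε t p := by
  simp only [nonresonantWeight_apply]
  fun_prop

theorem resonantWeight_ne_zero_iff (p : ℤ × ℤ × ℤ) : resonantWeight p ≠ 0 ↔ phase p = 0 :=
  ite_ne_right_iff.trans (and_iff_left one_ne_zero)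

theorem nonresonantWeight_ne_zero_iff (ε t : ℝ) (p : ℤ × ℤ × ℤ) :
    nonresonantWeight ε t p ≠ 0 ↔ phase p ≠ 0 := by
  rw [nonresonantWeight_apply, mul_ne_zero_iff_right (Complex.exp_ne_zero _), div_ne_zero_iff,
    and_iff_right two_ne_zero, Int.cast_ne_zero]

theorem mem_res1_iff (j : ℤ) (p : ℤ × ℤ × ℤ) :
    p ∈ res1 j ↔ outputFrequency p = j ∧ phase p = 0 := by
  refine and_congr_right fun hj : outputFrequency p = j => ?_
  rw [phase, hj]
  lia

theorem mem_nonres1_iff (j : ℤ) (p : ℤ × ℤ × ℤ) :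
    p ∈ nonres1 j ↔ outputFrequency p = j ∧ phase p ≠ 0 := by
  refine and_congr_right fun hj : outputFrequency p = j => ?_
  rw [phase, hj]
  lia

/-- The operator `-i DN(x)`, where `N` is the resonant cubic nonlinearity. -/
noncomputable def resonantLinearization (x : lp (fun _ : ℤ => ℂ) 1) :
    lp (fun _ : ℤ => ℂ) 1 →L[ℝ] lp (fun _ : ℤ => ℂ) 1 :=
  -Complex.I • fderiv ℝ (fun y => cubicForm outputFrequency resonantWeight fun _ => y) x

theorem continuous_resonantLinearization : Continuous resonantLinearization := by
  have hcontDiff : ContDiff ℝ 1 fun y : lp (fun _ : ℤ => ℂ) 1 =>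
      cubicForm outputFrequency resonantWeight fun _ => y :=
    (cubicForm outputFrequency resonantWeight).contDiff.comp (by fun_prop)
  exact (hcontDiff.continuous_fderiv one_ne_zero).const_smul (-Complex.I)

theorem resonantLinearization_apply (x y : lp (fun _ : ℤ => ℂ) 1) :
    resonantLinearization x y = -Complex.I •
      ∑ i, cubicForm outputFrequency resonantWeight (Function.update (fun _ => x) i y) := by
  rw [resonantLinearization, smul_apply, fderiv_multilinear_diag_apply]

/-- The part `F_ε(t)` of the corrector system that does not involve the unknown `b`. -/
noncomputable def correctorForcing (ε : ℝ) (a : ℝ → lp (fun _ : ℤ => ℂ) 1) (t : ℝ) :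
    lp (fun _ : ℤ => ℂ) 1 :=
  cubicForm outputFrequency (nonresonantWeight ε 0) (fun _ => a 0) -
    cubicForm outputFrequency (nonresonantWeight ε t) fun _ => a t

variable {a b : ℝ → lp (fun _ : ℤ => ℂ) 1}

theorem continuousOn_correctorForcing (ε : ℝ) {s : Set ℝ} (ha : ContinuousOn a s) :
    ContinuousOn (correctorForcing ε a) s :=
  continuousOn_const.sub <| continuousOn_cubicForm outputFrequency (norm_nonresonantWeight_le ε)
    (continuous_nonresonantWeight_apply ε) (continuousOn_pi.2 fun _ => ha)

theorem norm_correctorForcing_le (ε : ℝ) {t K : ℝ} (h0 : ‖a 0‖ ≤ K) (ht : ‖a t‖ ≤ K) :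
    ‖correctorForcing ε a t‖ ≤ 4 * K ^ 3 := by
  have hcubic (s : ℝ) (hs : ‖a s‖ ≤ K) :
      ‖cubicForm outputFrequency (nonresonantWeight ε s) fun _ => a s‖ ≤ 2 * K ^ 3 :=
    calc
      _ ≤ 2 * ∏ _i : Fin 3, ‖a s‖ := ContinuousMultilinearMap.le_of_opNorm_le
        ((norm_cubicForm_le _ _).trans (norm_nonresonantWeight_le ε s)) _
      _ ≤ 2 * K ^ 3 := by
        rw [Fin.prod_const]
        gcongr
  calc ‖correctorForcing ε a t‖ ≤ 2 * K ^ 3 + 2 * K ^ 3 :=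
        norm_sub_le_of_le (hcubic 0 h0) (hcubic t ht)
    _ = 4 * K ^ 3 := by ring

variable (a) in
theorem hasSum_nonres1_correctorForcing (ε t : ℝ) (j : ℤ) :
    HasSum (fun p : nonres1 j =>
      (2 / ((j ^ 2 - p.1.1 ^ 2 + p.1.2.1 ^ 2 - p.1.2.2 ^ 2 : ℤ) : ℂ)) *
        ((a t p.1.1 * (starRingEnd ℂ) (a t p.1.2.1) * a t p.1.2.2) *
            Complex.exp (Complex.I *
              ((j ^ 2 - p.1.1 ^ 2 + p.1.2.1 ^ 2 - p.1.2.2 ^ 2 : ℤ) : ℂ) * t / (2 * ε)) -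
          a 0 p.1.1 * (starRingEnd ℂ) (a 0 p.1.2.1) * a 0 p.1.2.2))
      (-correctorForcing ε a t j) := by
  have hsum (s : ℝ) := hasSum_subtype_coord_of_hasSum_single (j := j)
    (fun p => by rw [mem_nonres1_iff, nonresonantWeight_ne_zero_iff])
    (hasSum_cubicForm outputFrequency (nonresonantWeight ε s) fun _ => a s)
  rw [correctorForcing, lp.coeFn_sub, Pi.sub_apply, neg_sub]
  refine ((hsum t).sub (hsum 0)).congr_fun fun ⟨p, hp⟩ => ?_
  have hphase : j ^ 2 - p.1 ^ 2 + p.2.1 ^ 2 - p.2.2 ^ 2 = phase p := by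
    rw [phase, ((mem_nonres1_iff j p).1 hp).1]
  simp only [hphase, nonresonantWeight_apply, cubicMonomial_apply, Complex.ofReal_zero, mul_zero,
    zero_div, Complex.exp_zero]
  ring

theorem hasSum_res1_integral_resonantLinearization {t : ℝ} (ha : ContinuousOn a (uIcc 0 t))
    (hb : ContinuousOn b (uIcc 0 t)) (j : ℤ) :
    HasSum (fun p : res1 j => ∫ τ in 0..t,
      (a τ p.1.1 * (starRingEnd ℂ) (a τ p.1.2.1) * b τ p.1.2.2 +
        a τ p.1.1 * (starRingEnd ℂ) (b τ p.1.2.1) * a τ p.1.2.2 +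
        b τ p.1.1 * (starRingEnd ℂ) (a τ p.1.2.1) * a τ p.1.2.2))
      (Complex.I * (∫ τ in (0 : ℝ)..t, resonantLinearization (a τ) (b τ)) j) := by
  let m (i : Fin 3) (τ : ℝ) := Function.update (fun _ => a τ) i (b τ)
  have hm (i : Fin 3) : ContinuousOn (m i) (uIcc 0 t) := fun τ hτ =>
    (tendsto_pi_nhds.2 fun _ => ha τ hτ).update i (hb τ hτ)
  have hcoord : Complex.I * (∫ τ in (0 : ℝ)..t, resonantLinearization (a τ) (b τ)) j =
      ∑ i, (∫ τ in (0 : ℝ)..t, cubicForm outputFrequency resonantWeight (m i τ)) j := by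
    simp only [resonantLinearization_apply]
    rw [intervalIntegral.integral_smul, integral_sum_multilinear_apply _ hm, lp.coeFn_smul,
      Pi.smul_apply, lp.coeFn_sum, Finset.sum_apply, smul_eq_mul, ← mul_assoc, mul_neg,
      Complex.I_mul_I, neg_neg, one_mul]
  rw [hcoord]
  refine (hasSum_sum fun i _ => hasSum_subtype_coord_of_hasSum_single
    (fun p => by rw [mem_res1_iff, resonantWeight_ne_zero_iff])
    (hasSum_integral_cubicForm outputFrequency resonantWeight (hm i))).congr_fun fun ⟨p, hp⟩ => ?_
  have hweight : resonantWeight p = 1 := if_pos ((mem_res1_iff j p).1 hp).2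
  simp only [hweight, one_mul]
  rw [← integral_sum_multilinear_apply _ hm]
  refine intervalIntegral.integral_congr fun τ _ => ?_
  simp only [m, cubicMonomial_apply, Fin.sum_univ_three, Function.update, eq_rec_constant,
    dite_eq_ite, reduceIte, one_ne_zero, Fin.reduceEq, zero_ne_one]
  ring

theorem solvesCorrector_iff {T ε : ℝ} (ha : ContinuousOn a (Icc 0 T))
    (hb : ContinuousOn b (Icc 0 T)) :
    SolvesCorrector T ε a b ↔
      SolvesVolterra T (resonantLinearization ∘ a) (correctorForcing ε a) b := by
  rw [SolvesCorrector, forall_comm, SolvesVolterra]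
  refine forall_congr' fun t => forall_comm.trans (forall_congr' fun ht => ?_)
  rw [lp.ext_iff, funext_iff]
  refine forall_congr' fun j => ?_
  have htT : uIcc 0 t ⊆ Icc 0 T := uIcc_subset_Icc (left_mem_Icc.2 (ht.1.trans ht.2)) ht
  have hres := hasSum_res1_integral_resonantLinearization (ha.mono htT) (hb.mono htT) j
  have hnonres := hasSum_nonres1_correctorForcing a ε t j
  rw [and_iff_right hres.summable.norm, and_iff_right hnonres.summable.norm, hres.tsum_eq,
    hnonres.tsum_eq, lp.coeFn_add, Pi.add_apply, ← mul_assoc, neg_mul, Complex.I_mul_I]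
  simp only [neg_neg, one_mul, sub_neg_eq_add]
  rw [add_comm]
  rfl

theorem corrector_system_wellposedness_general {T : ℝ} (hT : 0 ≤ T)
    (ha : ContinuousOn a (Icc 0 T)) :
    ∃ B : ℝ → ℝ → lp (fun _ : ℤ => ℂ) 1,
      (∀ ε : ℝ, ε ≠ 0 → (ContinuousOn (B ε) (Icc 0 T) ∧ SolvesCorrector T ε a (B ε)) ∧
        ∀ b : ℝ → lp (fun _ : ℤ => ℂ) 1, ContinuousOn b (Icc 0 T) → SolvesCorrector T ε a b →
          ∀ t ∈ Icc 0 T, b t = B ε t) ∧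
      ∃ C : ℝ, ∀ ε : ℝ, ε ≠ 0 → ∀ t ∈ Icc 0 T, ‖B ε t‖ ≤ C := by
  have hA : ContinuousOn (resonantLinearization ∘ a) (Icc 0 T) :=
    continuous_resonantLinearization.comp_continuousOn ha
  obtain ⟨K, hK⟩ := isCompact_Icc.exists_bound_of_continuousOn ha
  obtain ⟨M, hM⟩ := isCompact_Icc.exists_bound_of_continuousOn hA
  choose B hB hunique hbound using fun ε => solvesVolterra_wellposed hT hA hM
    (continuousOn_correctorForcing ε ha)
    fun t ht => norm_correctorForcing_le ε (hK 0 (left_mem_Icc.2 hT)) (hK t ht)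
  refine ⟨B, fun ε _ => ⟨⟨(hB ε).1, (solvesCorrector_iff ha (hB ε).1).2 (hB ε).2⟩,
    fun b hb hsol => hunique ε b hb ((solvesCorrector_iff ha hb).1 hsol)⟩,
    Real.exp (M * T) * (4 * K ^ 3), fun ε _ => hbound ε⟩

end Corrector

/-- **Well-posedness and uniform bounds for the corrector system (Lemma 3.4).**
Given `T > 0` and `(a_j) ∈ C([0,T]; ℓ¹(ℤ))`, for every `ε ∈ (0,1]` the linear
corrector system has a unique solution `(b_j^ε) ∈ C([0,T]; ℓ¹(ℤ))`; moreover the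
solutions are bounded in `C([0,T]; ℓ¹)` uniformly in `ε ∈ (0,1]`. -/
theorem corrector_system_wellposedness (T : ℝ) (hT : 0 < T)
    (a : ℝ → lp (fun _ : ℤ => ℂ) 1) (ha : ContinuousOn a (Set.Icc 0 T)) :
    ∃ B : ℝ → ℝ → lp (fun _ : ℤ => ℂ) 1,
      (∀ ε ∈ Set.Ioc (0 : ℝ) 1,
        (ContinuousOn (B ε) (Set.Icc 0 T) ∧ SolvesCorrector T ε a (B ε)) ∧
        ∀ b : ℝ → lp (fun _ : ℤ => ℂ) 1,
          ContinuousOn b (Set.Icc 0 T) → SolvesCorrector T ε a b →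
          ∀ t ∈ Set.Icc (0 : ℝ) T, b t = B ε t) ∧
      ∃ C : ℝ, ∀ ε ∈ Set.Ioc (0 : ℝ) 1, ∀ t ∈ Set.Icc (0 : ℝ) T, ‖B ε t‖ ≤ C :=
  let ⟨B, hB, C, hC⟩ := corrector_system_wellposedness_general hT.le ha
  ⟨B, fun ε hε => hB ε hε.1.ne', C, fun ε hε => hC ε hε.1.ne'⟩
end
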